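/- Let n ≥ 1, let Γ be the permutahedron graph with K-ring K_α(Γ), and let π : S_{n+1} → {1,…,n+1}, π(σ) = σ(1). For p ∈ {1,…,n+1} let Γ_p be the fiber {σ ∈ S_{n+1} : σ(1) = p}, and let K(Γ_p) be the R-algebra of maps h : Γ_p → R such that (z_{σ(i)} − z_{σ(j)}) divides h(σ) − h(σ(i j)) for every σ ∈ Γ_p and every transposition (i j) with σ(i j) ∈ Γ_p. Suppose c_1,…,c_m ∈ K_α(Γ) are classes such that, for every p, the restrictions of c_1,…,c_m to Γ_p form a basis of K(Γ_p) as an R-module. Then every c ∈ K_α(Γ) can be written uniquely as c = Σ_{k=1}^m (π*β_k)·c_k, where each β_k : {1,…,n+1} → R satisfies (z_p − z_q) ∣ β_k(p) − β_k(q) for all p ≠ q (i.e., c_1,…,c_m freely generate K_α(Γ) as a module over the subring of basic classes π*(K_α(K_{n+1}))). -/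

import Mathlib

/-- The Laurent polynomial ring `R = ℤ[z₁^{±1},…,z_{n+1}^{±1}]`, realized as the group
algebra of `ℤ^{n+1}` over `ℤ`. -/
abbrev Laur (n : ℕ) : Type := AddMonoidAlgebra ℤ (Fin n → ℤ)

/-- The variable `z_j ∈ R`. -/
noncomputable def Z (n : ℕ) (j : Fin n) : Laur n :=
  AddMonoidAlgebra.single (Pi.single j 1) 1

/-- Membership in `K_α(Γ)` for the permutahedron `Γ` (GKM graph of `Fl(ℂ^{n+1})`, vertex
set `S_{n+1}`, edges `σ ∼ σ(i j)` with label `z_{σ(i)} − z_{σ(j)}`). -/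
def IsKPClass (n : ℕ) (h : Equiv.Perm (Fin (n + 1)) → Laur (n + 1)) : Prop :=
  ∀ (σ : Equiv.Perm (Fin (n + 1))) (i j : Fin (n + 1)), i ≠ j →
    (Z (n + 1) (σ i) - Z (n + 1) (σ j)) ∣ h σ - h (σ * Equiv.swap i j)

/-- Membership in `K_α(K_{n+1})`: `(z_p − z_q) ∣ β(p) − β(q)` for all `p ≠ q`. -/
def IsKBClass (n : ℕ) (β : Fin (n + 1) → Laur (n + 1)) : Prop :=
  ∀ p q : Fin (n + 1), p ≠ q → (Z (n + 1) p - Z (n + 1) q) ∣ β p - β q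

/-- The fiber `Γ_p = π^{-1}(p)` of `π : S_{n+1} → {1,…,n+1}`, `π(σ) = σ(1)` (the first
letter being coded by `0 : Fin (n+1)`). -/
def Fiber (n : ℕ) (p : Fin (n + 1)) : Type :=
  {σ : Equiv.Perm (Fin (n + 1)) // σ 0 = p}

/-- Membership in `K(Γ_p)`: the divisibility condition along every edge of the
permutahedron both of whose endpoints lie in the fiber `Γ_p`. -/
def IsFiberClass (n : ℕ) (p : Fin (n + 1)) (h : Fiber n p → Laur (n + 1)) : Prop :=
  ∀ (σ : Fiber n p) (i j : Fin (n + 1)), i ≠ j →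
    ∀ hq : (σ.1 * Equiv.swap i j) 0 = p,
      (Z (n + 1) (σ.1 i) - Z (n + 1) (σ.1 j)) ∣ h σ - h ⟨σ.1 * Equiv.swap i j, hq⟩

/-- exponent map of the substitution `z_a ↦ z_b`. -/
def substExp (n : ℕ) (a b : Fin n) : (Fin n → ℤ) →+ (Fin n → ℤ) :=
  AddMonoidHom.mk' (fun e => e + e a • (Pi.single b 1 - Pi.single a 1)) (by
    intro x y
    simp only [Pi.add_apply, add_smul]
    abel)

/-- the substitution `z_a ↦ z_b`. -/
noncomputable def substHom (n : ℕ) (a b : Fin n) : Laur n →+* Laur n :=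
  AddMonoidAlgebra.mapDomainRingHom ℤ (substExp n a b)

theorem substHom_single (n : ℕ) (a b : Fin n) (e : Fin n → ℤ) (r : ℤ) :
    substHom n a b (AddMonoidAlgebra.single e r) =
      AddMonoidAlgebra.single (e + e a • (Pi.single b 1 - Pi.single a 1)) r := by
  simp [substHom, substExp]

theorem substHom_Z_self (n : ℕ) (a b : Fin n) : substHom n a b (Z n a) = Z n b := by
  simp [Z, substHom_single]

theorem substHom_Z_ne (n : ℕ) (a b p : Fin n) (h : p ≠ a) :
    substHom n a b (Z n p) = Z n p := by
  simp [Z, substHom_single, Pi.single_eq_of_ne h.symm]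

theorem Z_ne (n : ℕ) (p q : Fin n) (h : p ≠ q) : Z n p ≠ Z n q := by
  intro hh
  have := Finsupp.single_left_injective (one_ne_zero (α := ℤ))
    (congrArg AddMonoidAlgebra.coeff hh)
  have h2 := congrFun this p
  simp [Pi.single_eq_of_ne h] at h2

theorem dvd_pow_diff (n : ℕ) (a b : Fin n) (k : ℤ) :
    (Z n a - Z n b) ∣ (AddMonoidAlgebra.single (k • Pi.single a 1) 1 -
      AddMonoidAlgebra.single (k • Pi.single b 1) 1 : Laur n) := by
  have key : ∀ (k : ℤ) (j : Fin n),
      (AddMonoidAlgebra.single ((k + 1) • Pi.single j 1) 1 : Laur n) =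
      AddMonoidAlgebra.single (k • Pi.single j 1) 1 * Z n j := by
    intro k j
    rw [Z, AddMonoidAlgebra.single_mul_single, add_smul, one_smul, one_mul]
  have key2 : ∀ (k : ℤ) (j : Fin n),
      (AddMonoidAlgebra.single ((k - 1) • Pi.single j 1) 1 : Laur n) =
      AddMonoidAlgebra.single (k • Pi.single j 1) 1 *
        AddMonoidAlgebra.single (-Pi.single j 1) 1 := by
    intro k j
    rw [AddMonoidAlgebra.single_mul_single, sub_smul, one_smul, one_mul, sub_eq_add_neg]
  have inv : ∀ j : Fin n, Z n j * AddMonoidAlgebra.single (-Pi.single j 1) 1 = 1 := by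
    intro j
    rw [Z, AddMonoidAlgebra.single_mul_single, add_neg_cancel, one_mul]
    rfl
  induction k using Int.induction_on with
  | zero => simp
  | succ i ih =>
    obtain ⟨w, hw⟩ := ih
    rw [key, key]
    exact ⟨AddMonoidAlgebra.single ((i : ℤ) • Pi.single a 1) 1 + Z n b * w, by
      linear_combination (Z n b) * hw⟩
  | pred i ih =>
    obtain ⟨w, hw⟩ := ih
    rw [key2, key2]
    have ha := inv a
    have hb := inv b
    generalize (AddMonoidAlgebra.single (-Pi.single a 1) 1 : Laur n) = A at *
    generalize (AddMonoidAlgebra.single (-Pi.single b 1) 1 : Laur n) = B at *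
    generalize (AddMonoidAlgebra.single ((-(i : ℤ)) • Pi.single a 1) 1 : Laur n) = X at *
    generalize (AddMonoidAlgebra.single ((-(i : ℤ)) • Pi.single b 1) 1 : Laur n) = Y at *
    exact ⟨A * w - Y * A * B, by
      linear_combination A * hw + Y * B * ha - Y * A * hb⟩

theorem dvd_sub_subst (n : ℕ) (a b : Fin n) (f : Laur n) :
    (Z n a - Z n b) ∣ f - substHom n a b f := by
  induction f using AddMonoidAlgebra.induction_linear with
  | zero => simp
  | add f g hf hg =>
    rw [map_add, add_sub_add_comm]
    exact dvd_add hf hg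
  | single e r =>
    rw [substHom_single]
    have h1 : (AddMonoidAlgebra.single e r : Laur n) =
        AddMonoidAlgebra.single (e - e a • Pi.single a 1) r *
          AddMonoidAlgebra.single (e a • Pi.single a 1) 1 := by
      rw [AddMonoidAlgebra.single_mul_single, sub_add_cancel, mul_one]
    have h2 : (AddMonoidAlgebra.single (e + e a • (Pi.single b 1 - Pi.single a 1)) r : Laur n) =
        AddMonoidAlgebra.single (e - e a • Pi.single a 1) r *
          AddMonoidAlgebra.single (e a • Pi.single b 1) 1 := by
      rw [AddMonoidAlgebra.single_mul_single, mul_one, smul_sub]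
      congr 1
      abel
    rw [h2]
    nth_rewrite 1 [h1]
    rw [← mul_sub]
    exact Dvd.dvd.mul_left (dvd_pow_diff n a b (e a)) _

theorem Z_coprime (n : ℕ) (a b p q : Fin n) (hab : a ≠ b) (hpq : p ≠ q) (ha : a ≠ p)
    (hb : b ≠ p) (x : Laur n) (h : (Z n a - Z n b) ∣ (Z n p - Z n q) * x) :
    (Z n a - Z n b) ∣ x := by
  have h0 : substHom n a b ((Z n p - Z n q) * x) = 0 := by
    obtain ⟨w, hw⟩ := h
    rw [hw, map_mul, map_sub, substHom_Z_self, substHom_Z_ne n a b b hab.symm, sub_self, zero_mul]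
  have hx : substHom n a b x = 0 := by
    rw [map_mul, map_sub, substHom_Z_ne n a b p ha.symm] at h0
    rcases mul_eq_zero.1 h0 with h1 | h1
    · exfalso
      by_cases hq : q = a
      · rw [hq, substHom_Z_self] at h1
        exact Z_ne n p b hb.symm (sub_eq_zero.1 h1)
      · rw [substHom_Z_ne n a b q hq] at h1
        exact Z_ne n p q hpq (sub_eq_zero.1 h1)
    · exact h1
  have := dvd_sub_subst n a b x
  rwa [hx, sub_zero] at this

/-- if `c_1,…,c_m ∈ K_α(Γ)` restrict on every fiber `Γ_p` of
`π : S_{n+1} → {1,…,n+1}` to a basis of `K(Γ_p)` over `R`, then every `c ∈ K_α(Γ)` is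
uniquely a combination `c = Σ_k (π*β_k)·c_k` with each `β_k ∈ K_α(K_{n+1})`; i.e. the
`c_k` freely generate `K_α(Γ)` over the subring of basic classes. -/
theorem stmt14 (n : ℕ) (hn : 1 ≤ n) (m : ℕ)
    (c : Fin m → Equiv.Perm (Fin (n + 1)) → Laur (n + 1))
    (hc : ∀ k, IsKPClass n (c k))
    (hrestr : ∀ p : Fin (n + 1), ∀ k, IsFiberClass n p (fun σ => c k σ.1))
    (hbasis : ∀ p : Fin (n + 1), ∀ h : Fiber n p → Laur (n + 1), IsFiberClass n p h →
      ∃! a : Fin m → Laur (n + 1), h = fun σ => ∑ k : Fin m, a k * c k σ.1) :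
    ∀ cc : Equiv.Perm (Fin (n + 1)) → Laur (n + 1), IsKPClass n cc →
      ∃! β : Fin m → (Fin (n + 1) → Laur (n + 1)),
        (∀ k, IsKBClass n (β k)) ∧
        cc = fun σ => ∑ k : Fin m, β k (σ 0) * c k σ := by
  intro cc hcc
  have hfib : ∀ p : Fin (n + 1), IsFiberClass n p (fun σ => cc σ.1) :=
    fun p σ i j hij _ => hcc σ.1 i j hij
  choose a ha hau using fun p => hbasis p _ (hfib p)
  have ha' : ∀ σ : Equiv.Perm (Fin (n + 1)), cc σ = ∑ k, a (σ 0) k * c k σ := fun σ =>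
    congrFun (ha (σ 0)) ⟨σ, rfl⟩
  refine ⟨fun k p => a p k, ⟨?_, funext ha'⟩, ?_⟩
  · intro k p q hpq
    have hd : ∀ σ : Fiber n p, (Z (n + 1) p - Z (n + 1) q) ∣
        ∑ k, (a p k - a q k) * c k σ.1 := by
      rintro ⟨σ, hσ⟩
      have hj : σ (σ.symm q) = q := σ.apply_symm_apply q
      have hne : (0 : Fin (n + 1)) ≠ σ.symm q := by
        intro h
        rw [← h, hσ] at hj
        exact hpq hj
      have h1 := hcc σ 0 (σ.symm q) hne
      have h2 := fun k => hc k σ 0 (σ.symm q) hne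
      have hτ : (σ * Equiv.swap 0 (σ.symm q)) 0 = q := by simp
      rw [ha' σ, ha' (σ * Equiv.swap 0 (σ.symm q)), hτ] at h1
      rw [hσ, hj] at h1
      simp only [hσ, hj] at h2
      have h3 : ∑ k, (a p k - a q k) * c k σ =
          (∑ k, a p k * c k σ - ∑ k, a q k * c k (σ * Equiv.swap 0 (σ.symm q))) -
          ∑ k, a q k * (c k σ - c k (σ * Equiv.swap 0 (σ.symm q))) := by
        rw [← Finset.sum_sub_distrib, ← Finset.sum_sub_distrib]
        exact Finset.sum_congr rfl fun k _ => by ring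
      change _ ∣ ∑ k, (a p k - a q k) * c k σ
      rw [h3]
      exact dvd_sub h1 (Finset.dvd_sum fun k _ => Dvd.dvd.mul_left (h2 k) _)
    choose g hg using hd
    have hgc : IsFiberClass n p g := by
      intro σ i j hij hq
      have hσ := σ.2
      have hi : i ≠ 0 := by
        rintro rfl
        rw [Equiv.Perm.mul_apply, Equiv.swap_apply_left] at hq
        exact hij (σ.1.injective (hq.trans hσ.symm)).symm
      have hj : j ≠ 0 := by
        rintro rfl
        rw [Equiv.Perm.mul_apply, Equiv.swap_apply_right] at hq
        exact hij (σ.1.injective (hq.trans hσ.symm))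
      refine Z_coprime (n + 1) (σ.1 i) (σ.1 j) p q (fun h => hij (σ.1.injective h)) hpq
        (fun h => hi (σ.1.injective (h.trans hσ.symm)))
        (fun h => hj (σ.1.injective (h.trans hσ.symm))) _ ?_
      have hg1 := hg σ
      have hg2 : ∑ k, (a p k - a q k) * c k (σ.1 * Equiv.swap i j) = _ :=
        hg ⟨σ.1 * Equiv.swap i j, hq⟩
      rw [mul_sub]
      refine (congrArg₂ (fun x y => _ ∣ x - y) hg1 hg2).mp ?_
      rw [← Finset.sum_sub_distrib]
      refine Finset.dvd_sum fun k _ => ?_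
      rw [← mul_sub]
      exact Dvd.dvd.mul_left (hc k σ.1 i j hij) _
    obtain ⟨b, hb, -⟩ := hbasis p g hgc
    have hb' : (fun k => a q k + (Z (n + 1) p - Z (n + 1) q) * b k) = a p := by
      refine hau p _ ?_
      funext σ
      have h1 := hg σ
      have h2 := congrFun (ha p) σ
      beta_reduce at h2 ⊢
      rw [hb] at h1
      simp only [sub_mul, Finset.sum_sub_distrib] at h1
      rw [h2]
      simp only [add_mul, Finset.sum_add_distrib, mul_assoc, ← Finset.mul_sum, sub_mul,
        Finset.sum_sub_distrib]
      linear_combination h1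
    refine ⟨b k, ?_⟩
    have := congrFun hb' k
    simp only at this ⊢
    linear_combination -this
  · rintro β ⟨-, hβ⟩
    funext k p
    have : (fun k => β k p) = a p := by
      refine hau p _ ?_
      funext σ
      have h1 := congrFun hβ σ.1
      have hσ := σ.2
      simp only [hσ] at h1
      exact h1
    exact congrFun this k
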